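/- Let p > 3 be prime and let ā, b̄ ∈ F_p with ā ≠ 0 and b̄ ≠ 0. Set D̄ = −4ā³ − 27b̄² and define u : ℕ → F_p by u(1) = 0, u(2) = −ā, u(3) = b̄, u(n+3) = b̄·u(n) − ā·u(n+1). Then the number of roots of x³ + āx = b̄ in F_p, counted with multiplicity (as roots of the polynomial X³ + āX − b̄ over F_p), equals 3 if D̄·u(p−2)² = 0; equals 0 if D̄·u(p−2)² = 9·ā²; and equals 1 if D̄·u(p−2)² ∉ {0, 9·ā²}. -/

import Mathlib

open scoped Classical
open Polynomial

/-- The sequence `u : ℕ → F_p` with `u 1 = 0`, `u 2 = -A`, `u 3 = B`,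
`u (n+3) = B * u n - A * u (n+1)`. -/
def useq {p : ℕ} (A B : ZMod p) : ℕ → ZMod p
  | 0 => 0
  | 1 => 0
  | 2 => -A
  | 3 => B
  | n + 4 => B * useq A B (n + 1) - A * useq A B (n + 2)

theorem useq_formula {p : ℕ} {K : Type*} [Field K] [Algebra (ZMod p) K] (a b : ZMod p)
    (x y z : K) (hs : x + y + z = 0) (h2 : x * y + y * z + z * x = algebraMap (ZMod p) K a)
    (h3 : x * y * z = algebraMap (ZMod p) K b) : ∀ n : ℕ,
    algebraMap (ZMod p) K (useq a b (n + 1)) * ((x - y) * (y - z) * (z - x)) =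
      -(x ^ (n + 3) * (y - z) + y ^ (n + 3) * (z - x) + z ^ (n + 3) * (x - y)) := by
  have hz : z = -x - y := by linear_combination hs
  subst hz
  intro n
  induction n using Nat.strong_induction_on with
  | _ n ih =>
    match n, ih with
    | 0, _ => simp only [useq, map_zero]; ring
    | 1, _ => simp only [useq, map_neg, ← h2]; ring
    | 2, _ => simp only [useq, ← h3]; ring
    | n + 3, ih =>
      have e1 := ih n (by omega)
      have e2 := ih (n + 1) (by omega)
      rw [show useq a b (n + 3 + 1) = b * useq a b (n + 1) - a * useq a b (n + 1 + 1) from rfl,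
        map_sub, map_mul, map_mul, sub_mul,
        mul_assoc (algebraMap (ZMod p) K b), mul_assoc (algebraMap (ZMod p) K a), e1, e2, ← h2, ← h3]
      ring

theorem key_formula {p : ℕ} [Fact p.Prime] (hp : 3 < p) {K : Type*} [Field K]
    [Algebra (ZMod p) K] (a b : ZMod p)
    (x y z : K) (hs : x + y + z = 0) (h2 : x * y + y * z + z * x = algebraMap (ZMod p) K a)
    (h3 : x * y * z = algebraMap (ZMod p) K b) :
    algebraMap (ZMod p) K ((-4 * a ^ 3 - 27 * b ^ 2) * useq a b (p - 2) ^ 2) =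
      (x ^ p * (y - z) + y ^ p * (z - x) + z ^ p * (x - y)) ^ 2 := by
  have h := useq_formula a b x y z hs h2 h3 (p - 3)
  rw [show p - 3 + 1 = p - 2 by omega, show p - 3 + 3 = p by omega] at h
  have hD : algebraMap (ZMod p) K (-4 * a ^ 3 - 27 * b ^ 2) =
      ((x - y) * (y - z) * (z - x)) ^ 2 := by
    have hz : z = -x - y := by linear_combination hs
    simp only [map_sub, map_mul, map_neg, map_pow, map_ofNat, ← h2, ← h3, hz]
    ring
  rw [map_mul, hD, map_pow, ← mul_pow, mul_comm, h, neg_sq]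

theorem fixed_mem {p : ℕ} [Fact p.Prime] {K : Type*} [Field K] [Algebra (ZMod p) K]
    (x : K) (h : x ^ p = x) : ∃ t : ZMod p, algebraMap (ZMod p) K t = x := by
  have : CharP K p := charP_of_injective_algebraMap (algebraMap (ZMod p) K).injective p
  have h1 := (Subfield.mem_bot_iff_pow_eq_self K p).2 h
  rw [Subfield.bot_eq_of_zMod_algebra p] at h1
  exact h1

theorem case_none {p : ℕ} [Fact p.Prime] (hp : 3 < p) (a b : ZMod p)
    (h : ∀ t : ZMod p, t ^ 3 + a * t - b ≠ 0) :
    (-4 * a ^ 3 - 27 * b ^ 2) * useq a b (p - 2) ^ 2 = 9 * a ^ 2 := by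
  let K := AlgebraicClosure (ZMod p)
  have : CharP K p := charP_of_injective_algebraMap (algebraMap (ZMod p) K).injective p
  let i := algebraMap (ZMod p) K
  have hi : Function.Injective i := i.injective
  have hfix : ∀ t : ZMod p, i t ^ p = i t := fun t => by rw [← map_pow, ZMod.pow_card]
  have hno : ∀ w : K, w ^ p = w → w ^ 3 + i a * w - i b ≠ 0 := by
    intro w hw hw0
    obtain ⟨t, rfl⟩ := fixed_mem (p := p) w hw
    apply h t
    apply hi
    simpa using hw0
  obtain ⟨x, hx⟩ : ∃ x : K, x ^ 3 + i a * x - i b = 0 := by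
    have hd : (X ^ 3 + C (i a) * X - C (i b) : K[X]).degree ≠ 0 := by
      rw [show (X ^ 3 + C (i a) * X - C (i b) : K[X]).degree = 3 by compute_degree!]
      norm_num
    obtain ⟨x, hx⟩ := IsAlgClosed.exists_root _ hd
    exact ⟨x, by simpa using hx⟩
  have hfr : ∀ w : K, w ^ 3 + i a * w - i b = 0 → (w ^ p) ^ 3 + i a * w ^ p - i b = 0 := by
    intro w hw
    have := congrArg (fun t => t ^ p) hw
    simp only [sub_pow_char, add_pow_char, mul_pow, hfix] at this
    rw [zero_pow (by omega)] at this
    rw [← this]; ring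
  have hy := hfr x hx
  have hxy : x ≠ x ^ p := fun e => hno x e.symm hx
  have hz := hfr _ hy
  have hyz : x ^ p ≠ (x ^ p) ^ p := fun e => hno _ e.symm hy
  set y := x ^ p with hyd
  set z := y ^ p with hzd
  have q1 : x ^ 2 + x * y + y ^ 2 + i a = 0 := by
    apply mul_left_cancel₀ (sub_ne_zero.2 hxy)
    linear_combination hx - hy
  have hzx : z ≠ x := by
    intro e
    apply hno (-x - y)
    · rw [show -x - y = -(x + y) by ring, neg_pow, add_pow_char, ← hyd, ← hzd, e]
      have : (-1 : K) ^ p = -1 := by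
        have := hfix (-1)
        simpa using this
      rw [this]; ring
    · linear_combination (-2 * x - y) * q1 + hx
  have q2 : y ^ 2 + y * z + z ^ 2 + i a = 0 := by
    apply mul_left_cancel₀ (sub_ne_zero.2 hyz)
    linear_combination hy - hz
  have hs : x + y + z = 0 := by
    apply mul_left_cancel₀ (sub_ne_zero.2 hzx)
    linear_combination q2 - q1
  have hzp : z ^ p = x := by
    have := congrArg (fun t => t ^ p) hs
    simp only [add_pow_char] at this
    rw [zero_pow (by omega), ← hyd, ← hzd] at this
    linear_combination this - hs
  have hz' : z = -x - y := by linear_combination hs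
  have h2 : x * y + y * z + z * x = i a := by
    rw [hz']; linear_combination -q1
  have h3 : x * y * z = i b := by
    rw [hz']; linear_combination hx - x * q1
  apply hi
  have := key_formula hp a b x y z hs h2 h3
  change i _ = _ at this
  rw [this, hzp, ← hyd, ← hzd, map_mul, map_pow, ← h2, map_ofNat, hz']
  ring

theorem case_one {p : ℕ} [Fact p.Prime] (hp : 3 < p) (a r : ZMod p)
    (h : ∀ t : ZMod p, t ^ 2 + r * t + (r ^ 2 + a) ≠ 0) :
    (-4 * a ^ 3 - 27 * (r ^ 3 + a * r) ^ 2) * useq a (r ^ 3 + a * r) (p - 2) ^ 2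
      = 9 * r ^ 2 * (-3 * r ^ 2 - 4 * a) := by
  let K := AlgebraicClosure (ZMod p)
  have : CharP K p := charP_of_injective_algebraMap (algebraMap (ZMod p) K).injective p
  let i := algebraMap (ZMod p) K
  have hi : Function.Injective i := i.injective
  have hfix : ∀ t : ZMod p, i t ^ p = i t := fun t => by rw [← map_pow, ZMod.pow_card]
  obtain ⟨x, hx⟩ : ∃ x : K, x ^ 2 + i r * x + (i r ^ 2 + i a) = 0 := by
    have hd : (X ^ 2 + C (i r) * X + C (i r ^ 2 + i a) : K[X]).degree ≠ 0 := by
      rw [show (X ^ 2 + C (i r) * X + C (i r ^ 2 + i a) : K[X]).degree = 2 by compute_degree!]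
      norm_num
    obtain ⟨x, hx⟩ := IsAlgClosed.exists_root _ hd
    exact ⟨x, by simpa using hx⟩
  have hxx : x ≠ x ^ p := by
    intro e
    obtain ⟨t, ht⟩ := fixed_mem (p := p) x e.symm
    apply h t
    apply hi
    change i t = x at ht
    simpa [ht] using hx
  have hy : (x ^ p) ^ 2 + i r * x ^ p + (i r ^ 2 + i a) = 0 := by
    have := congrArg (fun t => t ^ p) hx
    have hc : (i r ^ 2 + i a) ^ p = i r ^ 2 + i a := by
      have := hfix (r ^ 2 + a)
      simpa using this
    simp only [add_pow_char _ _ p, mul_pow, hfix] at this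
    rw [zero_pow (by omega)] at this
    rw [← this, pow_right_comm (i r), hfix]; ring
  set y := x ^ p with hyd
  have hs : i r + x + y = 0 := by
    apply mul_left_cancel₀ (sub_ne_zero.2 hxx)
    linear_combination hx - hy
  have hyp : y ^ p = x := by
    have := congrArg (fun t => t ^ p) hs
    simp only [add_pow_char, hfix] at this
    rw [zero_pow (by omega), ← hyd] at this
    linear_combination this - hs
  have hy' : y = - i r - x := by linear_combination hs
  have h2 : i r * x + x * y + y * i r = i a := by
    rw [hy']; linear_combination -hx
  have h3 : i r * x * y = i (r ^ 3 + a * r) := by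
    rw [hy', map_add, map_mul, map_pow]; linear_combination -i r * hx
  apply hi
  have := key_formula hp a _ (i r) x y hs h2 h3
  change i _ = _ at this
  rw [this, hfix, hyp, ← hyd]
  simp only [map_mul, map_sub, map_neg, map_pow, map_ofNat]
  rw [← h2, hy']
  ring

/-- the number of roots (with multiplicity) of `x³ + āx = b̄` in `F_p`
for `p > 3` and `ā, b̄ ≠ 0`. -/
theorem card_roots_cubic_zmod (p : ℕ) [Fact p.Prime] (hp : 3 < p)
    (abar bbar : ZMod p) (ha : abar ≠ 0) (hb : bbar ≠ 0)
    (Dbar : ZMod p) (hD : Dbar = -4 * abar ^ 3 - 27 * bbar ^ 2)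
    (N : ℕ)
    (hN : N = Multiset.card ((X ^ 3 + C abar * X - C bbar : Polynomial (ZMod p)).roots)) :
    (Dbar * useq abar bbar (p - 2) ^ 2 = 0 → N = 3) ∧
    (Dbar * useq abar bbar (p - 2) ^ 2 = 9 * abar ^ 2 → N = 0) ∧
    (Dbar * useq abar bbar (p - 2) ^ 2 ≠ 0 ∧
      Dbar * useq abar bbar (p - 2) ^ 2 ≠ 9 * abar ^ 2 → N = 1) := by
  have n2 : (2 : ZMod p) ≠ 0 := by
    have : ((2 : ℕ) : ZMod p) ≠ 0 := by
      rw [Ne, ZMod.natCast_eq_zero_iff]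
      exact Nat.not_dvd_of_pos_of_lt (by norm_num) (by omega)
    simpa using this
  have n3 : (3 : ZMod p) ≠ 0 := by
    have : ((3 : ℕ) : ZMod p) ≠ 0 := by
      rw [Ne, ZMod.natCast_eq_zero_iff]
      exact Nat.not_dvd_of_pos_of_lt (by norm_num) (by omega)
    simpa using this
  have n9 : (9 : ZMod p) * abar ^ 2 ≠ 0 := by
    rw [show (9 : ZMod p) = 3 * 3 by norm_num]
    positivity
  suffices H : (N = 3 ∧ Dbar * useq abar bbar (p - 2) ^ 2 = 0) ∨
      (N = 0 ∧ Dbar * useq abar bbar (p - 2) ^ 2 = 9 * abar ^ 2) ∨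
      (N = 1 ∧ Dbar * useq abar bbar (p - 2) ^ 2 ≠ 0 ∧
        Dbar * useq abar bbar (p - 2) ^ 2 ≠ 9 * abar ^ 2) by
    rcases H with ⟨h1, h2⟩ | ⟨h1, h2⟩ | ⟨h1, h2, h3⟩
    · exact ⟨fun _ => h1, fun h => absurd (h.symm.trans h2) n9, fun h => absurd h2 h.1⟩
    · exact ⟨fun h => absurd (h2.symm.trans h) n9, fun _ => h1, fun h => absurd h2 h.2⟩
    · exact ⟨fun h => absurd h h2, fun h => absurd h h3, fun _ => h1⟩
  subst hD
  have hf0 : (X ^ 3 + C abar * X - C bbar : Polynomial (ZMod p)) ≠ 0 := by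
    apply Monic.ne_zero
    monicity!
  by_cases hr : ∃ r : ZMod p, r ^ 3 + abar * r - bbar = 0
  swap
  · right; left
    push Not at hr
    refine ⟨?_, case_none hp abar bbar hr⟩
    rw [hN, Multiset.card_eq_zero]
    apply Multiset.eq_zero_of_forall_notMem
    intro t ht
    rw [mem_roots hf0] at ht
    exact hr t (by simpa using ht)
  obtain ⟨r, hr⟩ := hr
  have hb' : bbar = r ^ 3 + abar * r := by linear_combination -hr
  have hr0 : r ≠ 0 := by
    rintro rfl
    apply hb; rw [hb']; ring
  by_cases hs : ∃ s : ZMod p, s ^ 2 + r * s + (r ^ 2 + abar) = 0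
  · left
    obtain ⟨s, hs⟩ := hs
    constructor
    · have : (X ^ 3 + C abar * X - C bbar : Polynomial (ZMod p)) =
          (Multiset.map (fun t => X - C t) {r, s, -r - s}).prod := by
        have ha' : abar = - s ^ 2 - r * s - r ^ 2 := by linear_combination hs
        rw [hb', ha']
        simp only [Multiset.insert_eq_cons, Multiset.map_cons, Multiset.map_singleton,
          Multiset.prod_cons, Multiset.prod_singleton, map_sub, map_neg, map_add, map_mul, map_pow]
        ring
      rw [hN, this, roots_multiset_prod_X_sub_C]
      simp
    · have := key_formula hp (K := ZMod p) abar bbar r s (-r - s) (by ring)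
        (by simp only [Algebra.algebraMap_self, RingHom.id_apply]; linear_combination -hs)
        (by simp only [Algebra.algebraMap_self, RingHom.id_apply]; rw [hb'];
            linear_combination -r * hs)
      simp only [Algebra.algebraMap_self, RingHom.id_apply, ZMod.pow_card] at this
      rw [this]; ring
  · right; right
    push Not at hs
    have hk := case_one hp abar r hs
    rw [← hb'] at hk
    have hfac : (X ^ 3 + C abar * X - C bbar : Polynomial (ZMod p)) =
        (X - C r) * (X ^ 2 + C r * X + C (r ^ 2 + abar)) := by
      rw [hb']
      simp only [map_add, map_mul, map_pow]
      ring
    have n9' : (9 : ZMod p) ≠ 0 := by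
      rw [show (9 : ZMod p) = 3 * 3 by norm_num]
      exact mul_ne_zero n3 n3
    refine ⟨?_, ?_, ?_⟩
    · have hq : (X ^ 2 + C r * X + C (r ^ 2 + abar) : Polynomial (ZMod p)).roots = 0 := by
        apply Multiset.eq_zero_of_forall_notMem
        intro t ht
        have := isRoot_of_mem_roots ht
        exact hs t (by simpa using this)
      rw [hN, hfac, roots_mul (hfac ▸ hf0), hq, roots_X_sub_C]
      simp
    · rw [hk]
      refine mul_ne_zero (mul_ne_zero n9' (pow_ne_zero 2 hr0)) fun h => hs (-r / 2) ?_
      field_simp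
      linear_combination -h
    · rw [hk]
      intro h
      have h' : r ^ 2 * (-3 * r ^ 2 - 4 * abar) = abar ^ 2 := by
        apply mul_left_cancel₀ n9'
        linear_combination h
      apply hs ((-r + abar / r) / 2)
      field_simp
      linear_combination -h'
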